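/- arXiv:2405.02994 — 2 statements merged into one kernel-verified Lean document; each statement's English description precedes it below -/
import Mathlib

section
/- Let M, D₂, LC̄₃, LD₄, LD₅, L be real N×N (resp. appropriately sized) matrices, h > 0, P, Q real symmetric N×N matrices with P positive definite, Q positive semidefinite and MᵀP + PM = −Q. Define c₃ = λ_min(Q), c₄ = ‖2PLC̄₃‖, c₅ = ‖2PD₂‖ + ‖PLD₅‖, c₆ = ‖2PD₂‖ + ‖2PLD₄‖, c₇ = ‖PLD₅‖, let c₈ > 0, and c₉ = c₃ − c₄c₈ − (c₅ + c₆c₈ + c₇c₈)/h. Let Γ₂, Γ₃ : ℝ → ℝ^N be continuous, and let e : ℝ → ℝ^N be differentiable with, for all t ≥ 0, e'(t) = M·e(t) + (1/h)·D₂·(e(t) − e(t−h)) + LC̄₃·e(t−h) + (1/h)·LD₄·e(t−h) − (1/(2h))·LD₅·(e(t) + e(t−2h)) − Γ₂(t) − L·Γ₃(t). If at a time t ≥ 0 one has ‖e(t−h)‖ ≤ c₈‖e(t)‖ and ‖e(t−2h)‖ ≤ c₈‖e(t)‖, then V(t) := e(t)ᵀPe(t) satisfies V'(t) ≤ −c₉·‖e(t)‖²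 + 2‖P‖·( ‖Γ₂(t)‖ + ‖L‖·‖Γ₃(t)‖ )·‖e(t)‖. -/
open Matrix

/-- The operator norm of a square real matrix induced by the Euclidean norm. -/
noncomputable def l2OpNorm {N : ℕ} (M : Matrix (Fin N) (Fin N) ℝ) : ℝ :=
  ‖Matrix.toEuclideanCLM (𝕜 := ℝ) M‖


lemma aux_bound {N : ℕ} (A : Matrix (Fin N) (Fin N) ℝ) (x y : EuclideanSpace ℝ (Fin N)) :
    |inner ℝ x (Matrix.toEuclideanLin A y)| ≤ l2OpNorm A * ‖x‖ * ‖y‖ := by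
  have h1 := abs_real_inner_le_norm x (Matrix.toEuclideanLin A y)
  have h2 : ‖Matrix.toEuclideanLin A y‖ ≤ l2OpNorm A * ‖y‖ :=
    (Matrix.toEuclideanCLM (𝕜 := ℝ) A).le_opNorm y
  have h3 := mul_le_mul_of_nonneg_left h2 (norm_nonneg x)
  linarith

lemma aux_mul {N : ℕ} (A B : Matrix (Fin N) (Fin N) ℝ) (y : EuclideanSpace ℝ (Fin N)) :
    Matrix.toEuclideanLin A (Matrix.toEuclideanLin B y) = Matrix.toEuclideanLin (A * B) y := by
  have := DFunLike.congr_fun (map_mul (Matrix.toEuclideanCLM (𝕜 := ℝ)) A B) y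
  exact this.symm

lemma aux_tr {N : ℕ} (A : Matrix (Fin N) (Fin N) ℝ) (x y : EuclideanSpace ℝ (Fin N)) :
    inner ℝ (Matrix.toEuclideanLin A x) y = inner ℝ x (Matrix.toEuclideanLin Aᵀ y) := by
  rw [← Matrix.conjTranspose_eq_transpose_of_trivial,
    Matrix.toEuclideanLin_conjTranspose_eq_adjoint, LinearMap.adjoint_inner_right]

lemma aux_dot {N : ℕ} (A : Matrix (Fin N) (Fin N) ℝ) (x : EuclideanSpace ℝ (Fin N)) :
    x ⬝ᵥ (A *ᵥ x) = inner ℝ x (Matrix.toEuclideanLin A x) := by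
  rw [EuclideanSpace.inner_eq_star_dotProduct, dotProduct_comm]
  simp [Matrix.toLpLin_apply]

lemma aux_eig {N : ℕ} (Q : Matrix (Fin N) (Fin N) ℝ) (hQ : Q.IsHermitian)
    (x : EuclideanSpace ℝ (Fin N)) :
    (⨅ i, hQ.eigenvalues i) * ‖x‖ ^ 2 ≤ inner ℝ x (Matrix.toEuclideanLin Q x) := by
  rw [← hQ.eigenvectorBasis.sum_inner_mul_inner x, ← hQ.eigenvectorBasis.sum_sq_norm_inner_right x,
    Finset.mul_sum]
  refine Finset.sum_le_sum fun i _ => ?_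
  have h0 : Matrix.toEuclideanLin Q (hQ.eigenvectorBasis i)
      = hQ.eigenvalues i • hQ.eigenvectorBasis i := by
    have := hQ.mulVec_eigenvectorBasis i
    ext j
    simpa [Matrix.toLpLin_apply] using congrFun this j
  have h1 : inner ℝ (hQ.eigenvectorBasis i) (Matrix.toEuclideanLin Q x)
      = hQ.eigenvalues i * inner ℝ (hQ.eigenvectorBasis i) x := by
    have hT : Qᵀ = Q := by
      rw [← Matrix.conjTranspose_eq_transpose_of_trivial]; exact hQ
    have := aux_tr Q (hQ.eigenvectorBasis i) x
    rw [hT] at this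
    rw [← this, h0, real_inner_smul_left]
  rw [h1, real_inner_comm, Real.norm_eq_abs, sq_abs]
  have h2 : (⨅ i, hQ.eigenvalues i) ≤ hQ.eigenvalues i :=
    ciInf_le (Set.finite_range _).bddBelow i
  rw [real_inner_comm]
  nlinarith [mul_le_mul_of_nonneg_right h2 (sq_nonneg (inner ℝ (hQ.eigenvectorBasis i) x)),
    real_inner_comm x (hQ.eigenvectorBasis i)]

lemma aux_two {N : ℕ} (A : Matrix (Fin N) (Fin N) ℝ) :
    l2OpNorm ((2 : ℝ) • A) = 2 * l2OpNorm A := by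
  unfold l2OpNorm
  rw [map_smul, norm_smul]; simp

lemma aux_deriv {N : ℕ} (P : Matrix (Fin N) (Fin N) ℝ) (hP : P.IsSymm)
    (e : ℝ → EuclideanSpace ℝ (Fin N)) (he : Differentiable ℝ e) (t : ℝ) :
    deriv (fun s => e s ⬝ᵥ (P *ᵥ e s)) t
      = 2 * inner ℝ (e t) (Matrix.toEuclideanLin P (deriv e t)) := by
  have h1 := (he t).hasDerivAt
  have h2 : HasDerivAt (fun s => Matrix.toEuclideanLin P (e s))
      (Matrix.toEuclideanLin P (deriv e t)) t :=
    (Matrix.toEuclideanCLM (𝕜 := ℝ) P).hasFDerivAt.comp_hasDerivAt t h1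
  have h3 := (h1.inner ℝ h2).deriv
  simp only [aux_dot]
  rw [h3, ← hP.eq, ← aux_tr, hP.eq, real_inner_comm]
  ring

/-- Dissipation inequality for the Lyapunov function along the perturbed delayed observer
error dynamics, under the Razumikhin bounds at time `t`. -/
theorem lyapunov_dissipation_perturbed
    (N : ℕ) (hN : 0 < N) (h : ℝ) (hh : 0 < h)
    (M D2 LC3 LD4 LD5 L P Q : Matrix (Fin N) (Fin N) ℝ)
    (hPsymm : P.IsSymm) (hQsymm : Q.IsSymm)
    (hP : P.PosDef) (hQ : Q.PosSemidef)
    (hLyap : Mᵀ * P + P * M = -Q)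
    (c₃ c₄ c₅ c₆ c₇ c₈ c₉ : ℝ)
    (hc₃ : c₃ = ⨅ i, hQ.1.eigenvalues i)
    (hc₄ : c₄ = l2OpNorm ((2 : ℝ) • (P * LC3)))
    (hc₅ : c₅ = l2OpNorm ((2 : ℝ) • (P * D2)) + l2OpNorm (P * LD5))
    (hc₆ : c₆ = l2OpNorm ((2 : ℝ) • (P * D2)) + l2OpNorm ((2 : ℝ) • (P * LD4)))
    (hc₇ : c₇ = l2OpNorm (P * LD5))
    (hc₈ : 0 < c₈)
    (hc₉ : c₉ = c₃ - c₄ * c₈ - (c₅ + c₆ * c₈ + c₇ * c₈) / h)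
    (Γ₂ Γ₃ : ℝ → EuclideanSpace ℝ (Fin N)) (hΓ₂ : Continuous Γ₂) (hΓ₃ : Continuous Γ₃)
    (e : ℝ → EuclideanSpace ℝ (Fin N)) (he : Differentiable ℝ e)
    (hode : ∀ t : ℝ, 0 ≤ t →
      deriv e t = Matrix.toEuclideanLin M (e t)
        + (1 / h) • Matrix.toEuclideanLin D2 (e t - e (t - h))
        + Matrix.toEuclideanLin LC3 (e (t - h))
        + (1 / h) • Matrix.toEuclideanLin LD4 (e (t - h))
        - (1 / (2 * h)) • Matrix.toEuclideanLin LD5 (e t + e (t - 2 * h))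
        - Γ₂ t - Matrix.toEuclideanLin L (Γ₃ t))
    (t : ℝ) (ht : 0 ≤ t)
    (hrh : ‖e (t - h)‖ ≤ c₈ * ‖e t‖) (hr2h : ‖e (t - 2 * h)‖ ≤ c₈ * ‖e t‖) :
    deriv (fun s => e s ⬝ᵥ (P *ᵥ e s)) t
      ≤ -c₉ * ‖e t‖ ^ 2
        + 2 * l2OpNorm P * (‖Γ₂ t‖ + l2OpNorm L * ‖Γ₃ t‖) * ‖e t‖ := by
  rw [aux_deriv P hPsymm e he t, hode t ht]
  simp only [aux_two] at hc₄ hc₅ hc₆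
  set x := e t
  set y := e (t - h)
  set z := e (t - 2 * h)
  have hM : 2 * inner ℝ x (Matrix.toEuclideanLin (P * M) x)
      = - inner ℝ x (Matrix.toEuclideanLin Q x) := by
    have h1 : inner ℝ x (Matrix.toEuclideanLin (Mᵀ * P) x)
        = inner ℝ x (Matrix.toEuclideanLin (P * M) x) := by
      have := aux_tr (P * M) x x
      rw [Matrix.transpose_mul, hPsymm.eq, real_inner_comm] at this
      exact this.symm
    have h2 := congrArg (fun A => inner ℝ x (Matrix.toEuclideanLin A x)) hLyap
    simp only [map_add, map_neg, LinearMap.add_apply, LinearMap.neg_apply, inner_add_right,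
      inner_neg_right] at h2
    linarith
  have hE := aux_eig Q hQ.1 x
  rw [← hc₃] at hE
  have nn : ∀ A : Matrix (Fin N) (Fin N) ℝ, 0 ≤ l2OpNorm A := fun A => norm_nonneg _
  have key : ∀ (A : Matrix (Fin N) (Fin N) ℝ) (w : EuclideanSpace ℝ (Fin N)),
      ‖w‖ ≤ c₈ * ‖x‖ → |inner ℝ x (Matrix.toEuclideanLin A w)| ≤ l2OpNorm A * c₈ * ‖x‖ ^ 2 := by
    intro A w hw
    have h1 := aux_bound A x w
    have h2 := mul_le_mul_of_nonneg_left hw (mul_nonneg (nn A) (norm_nonneg x))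
    linarith
  have b1 := (abs_le.1 (aux_bound (P * D2) x x)).2
  have b2 := (abs_le.1 (key (P * D2) y hrh)).1
  have b3 := (abs_le.1 (key (P * LC3) y hrh)).2
  have b4 := (abs_le.1 (key (P * LD4) y hrh)).2
  have b5 := (abs_le.1 (aux_bound (P * LD5) x x)).1
  have b6 := (abs_le.1 (key (P * LD5) z hr2h)).1
  have b7 := (abs_le.1 (aux_bound P x (Γ₂ t))).1
  have b8 := (abs_le.1 (aux_bound P x (Matrix.toEuclideanLin L (Γ₃ t)))).1
  have b9 : ‖Matrix.toEuclideanLin L (Γ₃ t)‖ ≤ l2OpNorm L * ‖Γ₃ t‖ :=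
    (Matrix.toEuclideanCLM (𝕜 := ℝ) L).le_opNorm _
  have b10 := mul_le_mul_of_nonneg_left b9 (mul_nonneg (nn P) (norm_nonneg x))
  have hs : (1 / (2 * h)) = (1 / h) / 2 := by field_simp
  simp only [map_add, map_sub, map_smul, inner_add_right, inner_sub_right, inner_smul_right,
    smul_add, smul_sub]
  simp only [aux_mul] at *
  rw [hs]
  have hk : 0 ≤ 1 / h := by positivity
  rw [div_eq_mul_one_div] at hc₉
  generalize 1 / h = k at *
  have big : k * (2 * inner ℝ x (Matrix.toEuclideanLin (P * D2) x)
      - 2 * inner ℝ x (Matrix.toEuclideanLin (P * D2) y)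
      + 2 * inner ℝ x (Matrix.toEuclideanLin (P * LD4) y)
      - inner ℝ x (Matrix.toEuclideanLin (P * LD5) x)
      - inner ℝ x (Matrix.toEuclideanLin (P * LD5) z)) ≤
      k * ((c₅ + c₆ * c₈ + c₇ * c₈) * ‖x‖ ^ 2) := by
    apply mul_le_mul_of_nonneg_left _ hk
    rw [hc₅, hc₆, hc₇]
    linarith
  rw [hc₉, hc₄]
  linarith
end

section
/- (Theorem 1, perturbed case.) Let N ≥ 1, h > 0, κ > 1, let M, D₂, LC̄₃, LD₄, LD₅ and L, G be real matrices of compatible sizes, and let P, Q be real symmetric positive definite N×N matrices with MᵀP + PM = −Q. Define c₈ = √(κ·λ_max(P)/λ_min(P)) and c₉ = λ_min(Q) − ‖2PLC̄₃‖·c₈ − ( ‖2PD₂‖ + ‖PLD₅‖ + (‖2PD₂‖ + ‖2PLD₄‖)·c₈ + ‖PLD₅‖·c₈ )/h, and assume c₉ > 0. Then there exist positive constants α₂, β₂, γ₂, γ₃ (depending only on P, Q, M, L, G, D₂, C̄₃, D₄, D₅, h, κ) with the following property: for all constants d₂ ≥ 0 and m₀ ≥ 0, all continuous Γ₂, Γ₃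 : ℝ → ℝ^N with ‖Γ₂(t)‖ ≤ (d₂/2)·h and ‖Γ₃(t)‖ ≤ ‖G‖·(h·m₀ + d₂·h) for all t ≥ 0, and every differentiable e : ℝ → ℝ^N with e(t) ≠ 0 for all t, satisfying for all t ≥ 0 the delayed dynamics e'(t) = M·e(t) + (1/h)·D₂·(e(t) − e(t−h)) + LC̄₃·e(t−h) + (1/h)·LD₄·e(t−h) − (1/(2h))·LD₅·(e(t) + e(t−2h)) − Γ₂(t) − L·Γ₃(t) and the Razumikhin condition e(t+θ)ᵀP e(t+θ) ≤ κ·e(t)ᵀP e(t) for all θ ∈ [−2h, 0], one has, for all t ≥ 0, ‖e(t)‖ ≤ α₂·‖e(0)‖·e^{−β₂ t} + γ₂·d₂·h + γ₃·m₀·h. -/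
open Matrix

section aux
variable {E : Type*} [NormedAddCommGroup E] [InnerProductSpace ℝ E]

lemma aux_bil (P D : E →L[ℝ] E) (hP : ∀ x y, inner ℝ (P x) y = inner ℝ x (P y)) (x y : E) :
    |inner ℝ (P x) (D y)| ≤ ‖P * D‖ * (‖x‖ * ‖y‖) := by
  rw [hP]
  calc |inner ℝ x (P (D y))| ≤ ‖x‖ * ‖(P * D) y‖ := abs_real_inner_le_norm _ _
    _ ≤ ‖x‖ * (‖P * D‖ * ‖y‖) := by gcongr; exact (P * D).le_opNorm y
    _ = _ := by ring

lemma aux_deriv_s13 (M D2 LC3 LD4 LD5 L P : E →L[ℝ] E)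
    (hP : ∀ x y, inner ℝ (P x) y = inner ℝ x (P y)) (h q c s₂ s₃ : ℝ) (hh : 0 < h)
    (x y z g₂ g₃ : E)
    (hq : 2 * inner ℝ (P x) (M x) ≤ -q * ‖x‖ ^ 2)
    (hy : ‖y‖ ≤ c * ‖x‖) (hz : ‖z‖ ≤ c * ‖x‖) (h2 : ‖g₂‖ ≤ s₂) (h3 : ‖g₃‖ ≤ s₃) :
    2 * inner ℝ (P x) (M x + (1 / h) • D2 (x - y) + LC3 y + (1 / h) • LD4 y
      - (1 / (2 * h)) • LD5 (x + z) - g₂ - L g₃) ≤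
    -(q - 2 * ‖P * LC3‖ * c - (2 * ‖P * D2‖ + ‖P * LD5‖ + (2 * ‖P * D2‖ + 2 * ‖P * LD4‖) * c
      + ‖P * LD5‖ * c) / h) * ‖x‖ ^ 2 + 2 * ‖P‖ * (s₂ + ‖L‖ * s₃) * ‖x‖ := by
  have key : ∀ (D : E →L[ℝ] E) (w : E) (k : ℝ), ‖w‖ ≤ k * ‖x‖ →
      |inner ℝ (P x) (D w)| ≤ ‖P * D‖ * k * ‖x‖ ^ 2 := by
    intro D w k hw
    calc _ ≤ ‖P * D‖ * (‖x‖ * ‖w‖) := aux_bil P D hP x w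
      _ ≤ ‖P * D‖ * (‖x‖ * (k * ‖x‖)) := by gcongr
      _ = _ := by ring
  have a1 := abs_le.1 (key D2 x 1 (by simp))
  have a2 := abs_le.1 (key D2 y c hy)
  have a3 := abs_le.1 (key LC3 y c hy)
  have a4 := abs_le.1 (key LD4 y c hy)
  have a5 := abs_le.1 (key LD5 x 1 (by simp))
  have a6 := abs_le.1 (key LD5 z c hz)
  have a7 : |inner ℝ (P x) g₂| ≤ ‖P‖ * ‖x‖ * s₂ := by
    calc _ ≤ ‖P x‖ * ‖g₂‖ := abs_real_inner_le_norm _ _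
      _ ≤ _ := by gcongr; exact P.le_opNorm x
  have a8 : |inner ℝ (P x) (L g₃)| ≤ ‖P‖ * ‖x‖ * (‖L‖ * s₃) := by
    calc _ ≤ ‖P x‖ * ‖L g₃‖ := abs_real_inner_le_norm _ _
      _ ≤ _ := by
        gcongr
        · exact P.le_opNorm x
        · exact (L.le_opNorm g₃).trans (by gcongr)
  have a7 := abs_le.1 a7
  have a8 := abs_le.1 a8
  simp only [inner_add_right, inner_sub_right, map_add, map_sub, inner_smul_right]
  have b : (2 * inner ℝ (P x) (D2 x) - 2 * inner ℝ (P x) (D2 y) + 2 * inner ℝ (P x) (LD4 y)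
      - inner ℝ (P x) (LD5 x) - inner ℝ (P x) (LD5 z)) / h ≤
      ((2 * ‖P * D2‖ + ‖P * LD5‖ + (2 * ‖P * D2‖ + 2 * ‖P * LD4‖) * c
      + ‖P * LD5‖ * c) * ‖x‖ ^ 2) / h := by
    gcongr
    nlinarith
  have e1 : (2 * inner ℝ (P x) (D2 x) - 2 * inner ℝ (P x) (D2 y) + 2 * inner ℝ (P x) (LD4 y)
      - inner ℝ (P x) (LD5 x) - inner ℝ (P x) (LD5 z)) / h =
      2 * (1 / h * (inner ℝ (P x) (D2 x) - inner ℝ (P x) (D2 y)) + 1 / h * inner ℝ (P x) (LD4 y)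
      - 1 / (2 * h) * (inner ℝ (P x) (LD5 x) + inner ℝ (P x) (LD5 z))) := by
    field_simp
    ring
  have e2 := mul_div_right_comm (2 * ‖P * D2‖ + ‖P * LD5‖ + (2 * ‖P * D2‖ + 2 * ‖P * LD4‖) * c
      + ‖P * LD5‖ * c) (‖x‖ ^ 2) h
  rw [e1, e2] at b
  linarith [a3.2, a7.1, a8.1]

end aux

lemma aux_gronwall (V V' : ℝ → ℝ) (b K : ℝ) (hb : 0 < b) (hV : ∀ t, HasDerivAt V (V' t) t)
    (hle : ∀ t, 0 ≤ t → V' t ≤ -b * V t + K) (t : ℝ) (ht : 0 ≤ t) (hK : 0 ≤ K) :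
    V t ≤ V 0 * Real.exp (-b * t) + K / b := by
  have hd : ∀ t, HasDerivAt (fun t => Real.exp (b * t) * (V t - K / b))
      (Real.exp (b * t) * (b * V t - K + V' t)) t := by
    intro t
    have h1 : HasDerivAt (fun t : ℝ => Real.exp (b * t)) (Real.exp (b * t) * b) t := by
      simpa using ((hasDerivAt_id t).const_mul b).exp
    refine (h1.mul ((hV t).sub_const (K / b))).congr_deriv ?_
    have : b * (K / b) = K := mul_div_cancel₀ K hb.ne'
    linear_combination -(Real.exp (b * t)) * this
  have anti : AntitoneOn (fun t => Real.exp (b * t) * (V t - K / b)) (Set.Ici 0) := by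
    apply antitoneOn_of_deriv_nonpos (convex_Ici 0)
    · exact fun t _ => (hd t).continuousAt.continuousWithinAt
    · exact fun t _ => (hd t).differentiableAt.differentiableWithinAt
    · intro t ht
      rw [interior_Ici] at ht
      rw [(hd t).deriv]
      have := hle t (le_of_lt ht)
      exact mul_nonpos_of_nonneg_of_nonpos (Real.exp_pos _).le (by linarith)
  have h1 := anti (Set.mem_Ici.2 le_rfl) (Set.mem_Ici.2 ht) ht
  simp only [mul_zero, Real.exp_zero, one_mul] at h1
  have h2 := mul_le_mul_of_nonneg_left h1 (Real.exp_pos (-b * t)).le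
  rw [← mul_assoc, ← Real.exp_add] at h2
  simp only [neg_mul, neg_add_cancel, Real.exp_zero, one_mul] at h2
  have h3 : 0 ≤ Real.exp (-(b * t)) * (K / b) := by positivity
  rw [neg_mul]
  linarith

lemma aux_inner {N : ℕ} (P : Matrix (Fin N) (Fin N) ℝ) (x y : EuclideanSpace ℝ (Fin N)) :
    inner ℝ x (Matrix.toEuclideanCLM (𝕜 := ℝ) P y) = x ⬝ᵥ (P *ᵥ y) := by
  rw [EuclideanSpace.inner_eq_star_dotProduct]
  simp [dotProduct_comm]

lemma aux_symm {N : ℕ} (P : Matrix (Fin N) (Fin N) ℝ) (hP : P.IsHermitian)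
    (x y : EuclideanSpace ℝ (Fin N)) :
    inner ℝ (Matrix.toEuclideanCLM (𝕜 := ℝ) P x) y =
      inner ℝ x (Matrix.toEuclideanCLM (𝕜 := ℝ) P y) := by
  have : Pᵀ = P := by simpa [Matrix.IsHermitian, conjTranspose_eq_transpose_of_trivial] using hP
  rw [real_inner_comm, aux_inner, aux_inner, dotProduct_mulVec, ← mulVec_transpose, this,
    dotProduct_comm]

lemma aux_expand {N : ℕ} (P : Matrix (Fin N) (Fin N) ℝ) (hP : P.IsHermitian)
    (x : EuclideanSpace ℝ (Fin N)) :
    inner ℝ x (Matrix.toEuclideanCLM (𝕜 := ℝ) P x) =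
      ∑ i, hP.eigenvalues i * (inner ℝ (hP.eigenvectorBasis i) x) ^ 2 := by
  rw [← hP.eigenvectorBasis.sum_inner_mul_inner]
  refine Finset.sum_congr rfl fun i _ => ?_
  have : Matrix.toEuclideanCLM (𝕜 := ℝ) P (hP.eigenvectorBasis i) =
      hP.eigenvalues i • hP.eigenvectorBasis i := by
    ext j
    have := congrFun (hP.mulVec_eigenvectorBasis i) j
    simpa using this
  rw [← aux_symm P hP, this, real_inner_smul_left, real_inner_comm]
  ring

lemma aux_norm {N : ℕ} (P : Matrix (Fin N) (Fin N) ℝ) (hP : P.IsHermitian)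
    (x : EuclideanSpace ℝ (Fin N)) :
    ‖x‖ ^ 2 = ∑ i, (inner ℝ (hP.eigenvectorBasis i) x) ^ 2 := by
  rw [← real_inner_self_eq_norm_sq, ← hP.eigenvectorBasis.sum_inner_mul_inner]
  refine Finset.sum_congr rfl fun i _ => ?_
  rw [real_inner_comm]
  ring

lemma aux_lower {N : ℕ} (P : Matrix (Fin N) (Fin N) ℝ) (hP : P.IsHermitian)
    (x : EuclideanSpace ℝ (Fin N)) :
    (⨅ i, hP.eigenvalues i) * ‖x‖ ^ 2 ≤ inner ℝ x (Matrix.toEuclideanCLM (𝕜 := ℝ) P x) := by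
  rw [aux_expand P hP, aux_norm P hP, Finset.mul_sum]
  refine Finset.sum_le_sum fun i _ => ?_
  gcongr
  exact ciInf_le (Set.finite_range _).bddBelow i

lemma aux_upper {N : ℕ} (P : Matrix (Fin N) (Fin N) ℝ) (hP : P.IsHermitian)
    (x : EuclideanSpace ℝ (Fin N)) :
    inner ℝ x (Matrix.toEuclideanCLM (𝕜 := ℝ) P x) ≤ (⨆ i, hP.eigenvalues i) * ‖x‖ ^ 2 := by
  rw [aux_expand P hP, aux_norm P hP, Finset.mul_sum]
  refine Finset.sum_le_sum fun i _ => ?_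
  gcongr
  exact le_ciSup (Set.finite_range _).bddAbove i

lemma aux_opnorm2 {N : ℕ} (A B : Matrix (Fin N) (Fin N) ℝ) :
    l2OpNorm ((2 : ℝ) • (A * B)) = 2 * ‖Matrix.toEuclideanCLM (𝕜 := ℝ) A *
      Matrix.toEuclideanCLM (𝕜 := ℝ) B‖ := by
  rw [l2OpNorm, map_smul, map_mul, norm_smul]
  simp

lemma aux_opnorm1 {N : ℕ} (A B : Matrix (Fin N) (Fin N) ℝ) :
    l2OpNorm (A * B) = ‖Matrix.toEuclideanCLM (𝕜 := ℝ) A *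
      Matrix.toEuclideanCLM (𝕜 := ℝ) B‖ := by
  rw [l2OpNorm, map_mul]

lemma le_of_sq_le_sq_aux (a b : ℝ) (hb : 0 ≤ b) (h : a ^ 2 ≤ b ^ 2) : a ≤ b :=
  le_trans (le_abs_self a) (abs_le_of_sq_le_sq h hb)

lemma aux_sq_add (a x y : ℝ) (hx : 0 ≤ x) (hy : 0 ≤ y) (h : a ^ 2 ≤ x ^ 2 + y ^ 2) :
    a ≤ x + y := by
  apply le_of_sq_le_sq_aux _ _ (by positivity)
  nlinarith [mul_nonneg hx hy]

set_option maxHeartbeats 1000000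

/-- Theorem 1 (perturbed case): there exist positive constants `α₂, β₂, γ₂, γ₃` such that
every solution of the perturbed delayed observer error dynamics satisfying the Razumikhin
condition obeys `‖e(t)‖ ≤ α₂‖e(0)‖e^{-β₂ t} + γ₂ d₂ h + γ₃ m₀ h`. -/
theorem delayed_observer_perturbed_convergence
    (N : ℕ) (hN : 1 ≤ N) (h : ℝ) (hh : 0 < h) (κ : ℝ) (hκ : 1 < κ)
    (M D2 LC3 LD4 LD5 L G P Q : Matrix (Fin N) (Fin N) ℝ)
    (hPsymm : P.IsSymm) (hQsymm : Q.IsSymm)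
    (hP : P.PosDef) (hQ : Q.PosDef)
    (hLyap : Mᵀ * P + P * M = -Q)
    (lminP lmaxP lminQ c₈ c₉ : ℝ)
    (hlminP : lminP = ⨅ i, hP.1.eigenvalues i)
    (hlmaxP : lmaxP = ⨆ i, hP.1.eigenvalues i)
    (hlminQ : lminQ = ⨅ i, hQ.1.eigenvalues i)
    (hc₈ : c₈ = Real.sqrt (κ * lmaxP / lminP))
    (hc₉ : c₉ = lminQ - l2OpNorm ((2 : ℝ) • (P * LC3)) * c₈
      - (l2OpNorm ((2 : ℝ) • (P * D2)) + l2OpNorm (P * LD5)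
          + (l2OpNorm ((2 : ℝ) • (P * D2)) + l2OpNorm ((2 : ℝ) • (P * LD4))) * c₈
          + l2OpNorm (P * LD5) * c₈) / h)
    (hc₉pos : 0 < c₉) :
    ∃ α₂ β₂ γ₂ γ₃ : ℝ, 0 < α₂ ∧ 0 < β₂ ∧ 0 < γ₂ ∧ 0 < γ₃ ∧
      ∀ (d₂ m₀ : ℝ), 0 ≤ d₂ → 0 ≤ m₀ →
      ∀ Γ₂ Γ₃ : ℝ → EuclideanSpace ℝ (Fin N),
        Continuous Γ₂ → Continuous Γ₃ →
        (∀ t : ℝ, 0 ≤ t → ‖Γ₂ t‖ ≤ d₂ / 2 * h) →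
        (∀ t : ℝ, 0 ≤ t → ‖Γ₃ t‖ ≤ l2OpNorm G * (h * m₀ + d₂ * h)) →
      ∀ e : ℝ → EuclideanSpace ℝ (Fin N), Differentiable ℝ e →
        (∀ t : ℝ, e t ≠ 0) →
        (∀ t : ℝ, 0 ≤ t →
          deriv e t = Matrix.toEuclideanLin M (e t)
            + (1 / h) • Matrix.toEuclideanLin D2 (e t - e (t - h))
            + Matrix.toEuclideanLin LC3 (e (t - h))
            + (1 / h) • Matrix.toEuclideanLin LD4 (e (t - h))
            - (1 / (2 * h)) • Matrix.toEuclideanLin LD5 (e t + e (t - 2 * h))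
            - Γ₂ t - Matrix.toEuclideanLin L (Γ₃ t)) →
        (∀ t : ℝ, 0 ≤ t → ∀ θ ∈ Set.Icc (-(2 * h)) (0 : ℝ),
          e (t + θ) ⬝ᵥ (P *ᵥ e (t + θ)) ≤ κ * (e t ⬝ᵥ (P *ᵥ e t))) →
        ∀ t : ℝ, 0 ≤ t →
          ‖e t‖ ≤ α₂ * ‖e 0‖ * Real.exp (-β₂ * t) + γ₂ * d₂ * h + γ₃ * m₀ * h := by
  have : Nonempty (Fin N) := ⟨⟨0, hN⟩⟩
  have hlminPpos : 0 < lminP := by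
    obtain ⟨i, hi⟩ := exists_eq_ciInf_of_finite (f := hP.1.eigenvalues)
    rw [hlminP, ← hi]
    exact hP.eigenvalues_pos i
  have hlmaxPpos : 0 < lmaxP := by
    obtain ⟨i, hi⟩ := exists_eq_ciSup_of_finite (f := hP.1.eigenvalues)
    rw [hlmaxP, ← hi]
    exact hP.eigenvalues_pos i
  have lowP := aux_lower P hP.1
  have upP := aux_upper P hP.1
  have lowQ := aux_lower Q hQ.1
  rw [← hlminP] at lowP
  rw [← hlmaxP] at upP
  rw [← hlminQ] at lowQ
  have symP := aux_symm P hP.1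
  rw [aux_opnorm2, aux_opnorm2, aux_opnorm2, aux_opnorm1] at hc₉
  have hMq : ∀ x, 2 * inner ℝ (Matrix.toEuclideanCLM (𝕜 := ℝ) P x)
      (Matrix.toEuclideanCLM (𝕜 := ℝ) M x) ≤ -lminQ * ‖x‖ ^ 2 := by
    intro x
    have h1 : inner ℝ (Matrix.toEuclideanCLM (𝕜 := ℝ) P x) (Matrix.toEuclideanCLM (𝕜 := ℝ) M x)
        = x ⬝ᵥ ((P * M) *ᵥ x) := by
      rw [symP, ← aux_inner, map_mul]; rfl
    have h2 : x ⬝ᵥ ((P * M) *ᵥ x) = x ⬝ᵥ ((Mᵀ * P) *ᵥ x) := by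
      rw [dotProduct_mulVec, ← mulVec_transpose, transpose_mul, hPsymm.eq, dotProduct_comm]
    have h3 : x ⬝ᵥ ((Mᵀ * P) *ᵥ x) + x ⬝ᵥ ((P * M) *ᵥ x) = - (x ⬝ᵥ (Q *ᵥ x)) := by
      rw [← dotProduct_add, ← add_mulVec, hLyap, neg_mulVec, dotProduct_neg]
    have h4 := lowQ x
    rw [aux_inner] at h4
    linarith
  have hLin : ∀ (A : Matrix (Fin N) (Fin N) ℝ) x,
      Matrix.toEuclideanLin A x = Matrix.toEuclideanCLM (𝕜 := ℝ) A x := fun A x => rfl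
  have hG0 : 0 ≤ l2OpNorm G := norm_nonneg _
  generalize hg : l2OpNorm G = g at hG0 ⊢
  simp only [hLin, ← aux_inner]
  generalize Matrix.toEuclideanCLM (𝕜 := ℝ) P = P' at *
  generalize Matrix.toEuclideanCLM (𝕜 := ℝ) M = M' at *
  generalize Matrix.toEuclideanCLM (𝕜 := ℝ) D2 = D2' at *
  generalize Matrix.toEuclideanCLM (𝕜 := ℝ) LC3 = LC3' at *
  generalize Matrix.toEuclideanCLM (𝕜 := ℝ) LD4 = LD4' at *
  generalize Matrix.toEuclideanCLM (𝕜 := ℝ) LD5 = LD5' at *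
  generalize Matrix.toEuclideanCLM (𝕜 := ℝ) L = L' at *
  set b : ℝ := c₉ / (2 * lmaxP) with hbdef
  have hb : 0 < b := by positivity
  set ρ : ℝ := 1 / (2 * c₉ * b * lminP) with hρdef
  have hρ : 0 < ρ := by positivity
  refine ⟨Real.sqrt (lmaxP / lminP), b / 2,
    Real.sqrt ρ * (2 * ‖P'‖ * (1 / 2 + ‖L'‖ * g) + 1),
    Real.sqrt ρ * (2 * ‖P'‖ * (‖L'‖ * g) + 1), by positivity, by positivity, by positivity,
    by positivity, ?_⟩
  intro d₂ m₀ hd₂ hm₀ Γ₂ Γ₃ _ _ hΓ₂ hΓ₃ e he _ hdyn hraz t ht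
  set S : ℝ := 2 * ‖P'‖ * (d₂ / 2 * h + ‖L'‖ * (g * (h * m₀ + d₂ * h))) with hS
  have hS0 : 0 ≤ S := by positivity
  have hdelay : ∀ s, 0 ≤ s → ∀ θ ∈ Set.Icc (-(2 * h)) (0 : ℝ), ‖e (s + θ)‖ ≤ c₈ * ‖e s‖ := by
    intro s hs θ hθ
    have h1 := lowP (e (s + θ))
    have h2 := hraz s hs θ hθ
    have h3 := mul_le_mul_of_nonneg_left (upP (e s)) (by linarith : (0:ℝ) ≤ κ)
    have hc0 : 0 ≤ c₈ := hc₈ ▸ Real.sqrt_nonneg _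
    apply le_of_sq_le_sq_aux _ _ (by positivity)
    rw [mul_pow, hc₈, Real.sq_sqrt (by positivity), div_mul_eq_mul_div, le_div_iff₀ hlminPpos]
    linarith
  have hV : ∀ s, HasDerivAt (fun s => inner ℝ (e s) (P' (e s)))
      (2 * inner ℝ (P' (e s)) (deriv e s)) s := by
    intro s
    have h1 := (he s).hasDerivAt
    have h2 := P'.hasFDerivAt.comp_hasDerivAt s h1
    refine (h1.inner ℝ h2).congr_deriv ?_
    rw [← symP, Function.comp_apply, real_inner_comm (P' (e s)) (deriv e s)]
    ring
  have hle : ∀ s, 0 ≤ s → 2 * inner ℝ (P' (e s)) (deriv e s) ≤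
      -b * inner ℝ (e s) (P' (e s)) + S ^ 2 / (2 * c₉) := by
    intro s hs
    have h1 := aux_deriv_s13 M' D2' LC3' LD4' LD5' L' P' symP h lminQ c₈ _ _ hh (e s) (e (s - h))
      (e (s - 2 * h)) (Γ₂ s) (Γ₃ s) (hMq _)
      (hdelay s hs (-h) ⟨by linarith, by linarith⟩)
      (hdelay s hs (-(2 * h)) ⟨by linarith, by linarith⟩) (hΓ₂ s hs) (hΓ₃ s hs)
    rw [← hdyn s hs, ← hc₉, ← hS] at h1
    have h2 : b * inner ℝ (e s) (P' (e s)) ≤ c₉ / 2 * ‖e s‖ ^ 2 := by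
      calc _ ≤ b * (lmaxP * ‖e s‖ ^ 2) := by gcongr; exact upP _
        _ = _ := by rw [hbdef]; field_simp
    have h3 : S * ‖e s‖ ≤ c₉ / 2 * ‖e s‖ ^ 2 + S ^ 2 / (2 * c₉) := by
      have : c₉ / 2 * ‖e s‖ ^ 2 + S ^ 2 / (2 * c₉) - S * ‖e s‖ =
          (c₉ * ‖e s‖ - S) ^ 2 / (2 * c₉) := by field_simp; ring
      have : 0 ≤ (c₉ * ‖e s‖ - S) ^ 2 / (2 * c₉) := by positivity
      linarith
    linarith
  have hfin := aux_gronwall _ _ b _ hb hV hle t ht (by positivity)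
  have hsq : ‖e t‖ ^ 2 ≤ (Real.sqrt (lmaxP / lminP) * ‖e 0‖ * Real.exp (-(b / 2) * t)) ^ 2
      + (Real.sqrt ρ * S) ^ 2 := by
    rw [mul_pow, mul_pow, mul_pow, Real.sq_sqrt (by positivity), Real.sq_sqrt hρ.le,
      ← Real.exp_nat_mul]
    have e1 : ((2 : ℕ) : ℝ) * (-(b / 2) * t) = -b * t := by push_cast; ring
    rw [e1]
    have h1 := lowP (e t)
    have h2 := mul_le_mul_of_nonneg_right (upP (e 0)) (Real.exp_pos (-b * t)).le
    have h3 : lminP * ‖e t‖ ^ 2 ≤ lmaxP * ‖e 0‖ ^ 2 * Real.exp (-b * t)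
      + S ^ 2 / (2 * c₉) / b := by linarith
    have h4 : lmaxP / lminP * ‖e 0‖ ^ 2 * Real.exp (-b * t) + ρ * S ^ 2 =
      (lmaxP * ‖e 0‖ ^ 2 * Real.exp (-b * t) + S ^ 2 / (2 * c₉) / b) / lminP := by
      rw [hρdef]
      generalize b = b' at hb
      field_simp
    rw [h4, le_div_iff₀ hlminPpos]
    linarith
  have hX : 0 ≤ Real.sqrt (lmaxP / lminP) * ‖e 0‖ * Real.exp (-(b / 2) * t) := by positivity
  have hY : 0 ≤ Real.sqrt ρ * S := by positivity
  have hfin2 : ‖e t‖ ≤ Real.sqrt (lmaxP / lminP) * ‖e 0‖ * Real.exp (-(b / 2) * t)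
      + Real.sqrt ρ * S := aux_sq_add _ _ _ hX hY hsq
  have hSle : Real.sqrt ρ * S ≤ Real.sqrt ρ * (2 * ‖P'‖ * (1 / 2 + ‖L'‖ * g) + 1) * d₂ * h
      + Real.sqrt ρ * (2 * ‖P'‖ * (‖L'‖ * g) + 1) * m₀ * h := by
    have h1 : 0 ≤ Real.sqrt ρ * (d₂ * h) := by positivity
    have h2 : 0 ≤ Real.sqrt ρ * (m₀ * h) := by positivity
    rw [hS]
    linarith
  linarith
end
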